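/- Let G be a prime (P6, bull)-free graph containing an induced G7 (an induced 5-cycle C on c1,...,c5 with edges c_i c_{i+1} mod 5, plus d adjacent exactly to c1, c4, x and x adjacent only to d). Then every vertex of G either lies on C, or has exactly four neighbors on C, or has exactly two neighbors on C, or has at most one neighbor on C. -/

import Mathlib

open SimpleGraph

variable {V : Type*}

/-- The vertices `a b c d e` induce a bull in `G` (edges ab, bc, cd, be, ce). -/
def IsBull (G : SimpleGraph V) (a b c d e : V) : Prop :=
  a ≠ b ∧ a ≠ c ∧ a ≠ d ∧ a ≠ e ∧ b ≠ c ∧ b ≠ d ∧ b ≠ e ∧ c ≠ d ∧ c ≠ e ∧ d ≠ e ∧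
  G.Adj a b ∧ G.Adj b c ∧ G.Adj c d ∧ G.Adj b e ∧ G.Adj c e ∧
  ¬ G.Adj a c ∧ ¬ G.Adj a d ∧ ¬ G.Adj a e ∧ ¬ G.Adj b d ∧ ¬ G.Adj d e

/-- `G` contains no induced bull. -/
def BullFree (G : SimpleGraph V) : Prop := ∀ a b c d e : V, ¬ IsBull G a b c d e

/-- `G` contains no induced path on six vertices. -/
def P6Free (G : SimpleGraph V) : Prop :=
  ¬ ∃ p : Fin 6 → V, Function.Injective p ∧
      ∀ i j : Fin 6, G.Adj (p i) (p j) ↔ (i.val + 1 = j.val ∨ j.val + 1 = i.val)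

/-- `c` lists the vertices of an induced 5-cycle in `G` (indices mod 5). -/
def IsInducedC5 (G : SimpleGraph V) (c : Fin 5 → V) : Prop :=
  Function.Injective c ∧ ∀ i j : Fin 5, G.Adj (c i) (c j) ↔ (j = i + 1 ∨ i = j + 1)

/-- `S` is a homogeneous set in `G`. -/
def IsHomogeneous (G : SimpleGraph V) (S : Set V) : Prop :=
  ∀ v ∉ S, (∀ s ∈ S, G.Adj v s) ∨ (∀ s ∈ S, ¬ G.Adj v s)

/-- `S` is a proper homogeneous set: homogeneous, of size at least two, not all of `V`. -/
def IsProperHomogeneous (G : SimpleGraph V) (S : Set V) : Prop :=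
  IsHomogeneous G S ∧ (∃ a ∈ S, ∃ b ∈ S, a ≠ b) ∧ S ≠ Set.univ

/-- A graph is prime if it has no proper homogeneous set. -/
def IsPrimeGraph (G : SimpleGraph V) : Prop := ¬ ∃ S : Set V, IsProperHomogeneous G S

/-- Number of neighbors of `x` on the 5-cycle `c`. -/
def nbrCount (G : SimpleGraph V) [DecidableRel G.Adj] (c : Fin 5 → V) (x : V) : ℕ :=
  (Finset.univ.filter fun i : Fin 5 => G.Adj x (c i)).card



/-- A bull-free graph has no bull; distinctness follows from the adjacency pattern. -/
lemma no_bull {G : SimpleGraph V} (hB : BullFree G) (a b c d e : V)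
    (h1 : G.Adj a b) (h2 : G.Adj b c) (h3 : G.Adj c d) (h4 : G.Adj b e) (h5 : G.Adj c e)
    (n1 : ¬ G.Adj a c) (n2 : ¬ G.Adj a d) (n3 : ¬ G.Adj a e) (n4 : ¬ G.Adj b d)
    (n5 : ¬ G.Adj d e) : False := by
  refine hB a b c d e ⟨h1.ne, ?_, ?_, ?_, h2.ne, ?_, h4.ne, h3.ne, h5.ne, ?_,
    h1, h2, h3, h4, h5, n1, n2, n3, n4, n5⟩
  · rintro rfl; exact n2 h3
  · rintro rfl; exact n4 h1.symm
  · rintro rfl; exact n1 h5.symm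
  · rintro rfl; exact n2 h1
  · rintro rfl; exact n4 h4

/-- A P6-free graph has no induced six-vertex path. -/
lemma no_P6 {G : SimpleGraph V} (hP : P6Free G) (a b c d e f : V)
    (h1 : G.Adj a b) (h2 : G.Adj b c) (h3 : G.Adj c d) (h4 : G.Adj d e) (h5 : G.Adj e f)
    (n1 : ¬ G.Adj a c) (n2 : ¬ G.Adj a d) (n3 : ¬ G.Adj a e) (n4 : ¬ G.Adj a f)
    (n5 : ¬ G.Adj b d) (n6 : ¬ G.Adj b e) (n7 : ¬ G.Adj b f)
    (n8 : ¬ G.Adj c e) (n9 : ¬ G.Adj c f) (n10 : ¬ G.Adj d f) : False := by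
  have key : ∀ i j : Fin 6, G.Adj (![a, b, c, d, e, f] i) (![a, b, c, d, e, f] j) ↔
      (i.val + 1 = j.val ∨ j.val + 1 = i.val) := by
    intro i j
    fin_cases i <;> fin_cases j <;> simp [*, G.adj_comm]
  apply hP
  refine ⟨![a, b, c, d, e, f], ?_, key⟩
  intro i j hij
  have h : ∀ k : Fin 6, (i.val + 1 = k.val ∨ k.val + 1 = i.val) ↔
      (j.val + 1 = k.val ∨ k.val + 1 = j.val) := by
    intro k
    rw [← key, ← key, hij]
  revert h
  clear hij key
  revert i j
  decide

/-- The induced graph `G7`, described by its adjacencies. -/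
structure IsG7 (G : SimpleGraph V) (c0 c1 c2 c3 c4 d x : V) : Prop where
  e01 : G.Adj c0 c1
  e12 : G.Adj c1 c2
  e23 : G.Adj c2 c3
  e34 : G.Adj c3 c4
  e40 : G.Adj c4 c0
  n02 : ¬ G.Adj c0 c2
  n03 : ¬ G.Adj c0 c3
  n13 : ¬ G.Adj c1 c3
  n14 : ¬ G.Adj c1 c4
  n24 : ¬ G.Adj c2 c4
  d0 : G.Adj d c0
  d3 : G.Adj d c3
  d1 : ¬ G.Adj d c1
  d2 : ¬ G.Adj d c2
  d4 : ¬ G.Adj d c4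
  xd : G.Adj x d
  x0 : ¬ G.Adj x c0
  x1 : ¬ G.Adj x c1
  x2 : ¬ G.Adj x c2
  x3 : ¬ G.Adj x c3
  x4 : ¬ G.Adj x c4

/-- `t` is adjacent to `p, q` and nonadjacent to `r, s`. -/
def Twin (G : SimpleGraph V) (p q r s t : V) : Prop :=
  G.Adj t p ∧ G.Adj t q ∧ ¬ G.Adj t r ∧ ¬ G.Adj t s

/-- The reflection of `G7`. -/
lemma IsG7.refl {G : SimpleGraph V} {c0 c1 c2 c3 c4 d x : V}
    (h : IsG7 G c0 c1 c2 c3 c4 d x) : IsG7 G c3 c2 c1 c0 c4 d x := by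
  obtain ⟨h1, h2, h3, h4, h5, n1, n2, n3, n4, n5, h6, h7, n6, n7, n8, h8, m0, m1, m2, m3, m4⟩ := h
  constructor <;> first | assumption | (rw [G.adj_comm]; assumption)

/-- A set grown from adjacent twins, closed under distinguishing vertices, is homogeneous. -/
lemma grow {G : SimpleGraph V} (hPr : IsPrimeGraph G) (Good T : V → Prop) (c v z : V)
    (hc : Good c) (hv : T v) (hcv : G.Adj c v)
    (step : ∀ t t', Good t → T t' → G.Adj t t' → Good t')
    (dist : ∀ t t' y, Good t → Good t' → G.Adj t t' → G.Adj y t' → ¬ G.Adj y t → T y)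
    (hz : ¬ Good z) : False := by
  let R : V → V → Prop := fun s t => G.Adj s t ∧ T t
  have good : ∀ t, Relation.ReflTransGen R c t → Good t := by
    intro t ht
    induction ht with
    | refl => exact hc
    | tail _ hst ih => exact step _ _ ih hst.2 hst.1
  apply hPr
  refine ⟨{t | Relation.ReflTransGen R c t}, ?_, ⟨c, .refl, v, .single ⟨hcv, hv⟩, hcv.ne⟩, ?_⟩
  · intro y hy
    have hy' : ∀ t, Relation.ReflTransGen R c t → T y → ¬ G.Adj t y :=
      fun t ht hT ha => hy (Relation.ReflTransGen.tail ht ⟨ha, hT⟩)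
    have key : ∀ t, Relation.ReflTransGen R c t → (G.Adj y t ↔ G.Adj y c) := by
      intro t ht
      induction ht with
      | refl => rfl
      | @tail s t hs hst ih =>
        rw [← ih]
        have gs := good _ hs
        have gt := step _ _ gs hst.2 hst.1
        constructor
        · intro h
          by_contra hn
          exact hy' t (hs.tail hst) (dist s t y gs gt hst.1 h hn) h.symm
        · intro h
          by_contra hn
          exact hy' s hs (dist t s y gt gs hst.1.symm h hn) h.symm
    by_cases h : G.Adj y c
    · left; intro s hs; exact (key s hs).2 h
    · right; intro s hs hn; exact h ((key s hs).1 hn)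
  · intro h
    have : z ∈ {t | Relation.ReflTransGen R c t} := by rw [h]; trivial
    exact hz (good z this)

section
variable {G : SimpleGraph V} {c0 c1 c2 c3 c4 d x : V}

/-- A vertex complete to the cycle is adjacent to `d` and `x`. -/
lemma full_adj (hB : BullFree G) (h : IsG7 G c0 c1 c2 c3 c4 d x) (v : V)
    (v0 : G.Adj v c0) (v1 : G.Adj v c1) (v2 : G.Adj v c2) (v3 : G.Adj v c3) (v4 : G.Adj v c4) :
    G.Adj v d ∧ G.Adj v x := by
  obtain ⟨h1, h2, h3, h4, h5, n1, n2, n3, n4, n5, h6, h7, n6, n7, n8, h8, m0, m1, m2, m3, m4⟩ := h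
  have b1 := no_bull hB d c3 v c1 c4
  have b2 := no_bull hB x d v c2 c0
  grind [G.adj_comm]

/-- A vertex mixed on the cycle is adjacent to all vertices complete to the cycle. -/
lemma mixed_adj (hP : P6Free G) (hB : BullFree G) (h : IsG7 G c0 c1 c2 c3 c4 d x) (a u : V)
    (v0 : G.Adj a c0) (v1 : G.Adj a c1) (v2 : G.Adj a c2) (v3 : G.Adj a c3) (v4 : G.Adj a c4)
    (hn : ¬ (G.Adj u c0 ∧ G.Adj u c1 ∧ G.Adj u c2 ∧ G.Adj u c3 ∧ G.Adj u c4))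
    (hs : G.Adj u c0 ∨ G.Adj u c1 ∨ G.Adj u c2 ∨ G.Adj u c3 ∨ G.Adj u c4) : G.Adj u a := by
  obtain ⟨-, ax⟩ := full_adj hB h a v0 v1 v2 v3 v4
  obtain ⟨h1, h2, h3, h4, h5, n1, n2, n3, n4, n5, h6, h7, n6, n7, n8, h8, m0, m1, m2, m3, m4⟩ := h
  by_contra hua
  -- on any edge of the cycle, distinguishing forces adjacency to `x`
  have A : ∀ s s', G.Adj s s' → G.Adj a s → G.Adj a s' → ¬ G.Adj x s → ¬ G.Adj x s' →
      G.Adj u s → ¬ G.Adj u s' → G.Adj u x := by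
    intro s s' _ _ _ _ _ _ _
    have b := no_bull hB u s a x s'
    grind [G.adj_comm]
  have ux : G.Adj u x := by grind [G.adj_comm]
  -- single neighbor
  have B : ∀ p q r s t, G.Adj p q → G.Adj q r → G.Adj r s → G.Adj s t → G.Adj t p →
      ¬ G.Adj p r → ¬ G.Adj p s → ¬ G.Adj q s → ¬ G.Adj q t → ¬ G.Adj r t →
      ¬ G.Adj x p → ¬ G.Adj x q → ¬ G.Adj x r → ¬ G.Adj x s → ¬ G.Adj x t →
      G.Adj a p → G.Adj a q → G.Adj a r → G.Adj a s → G.Adj a t →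
      G.Adj u p → ¬ G.Adj u t → False := by
    intro p q r s t _ _ _ _ _ _ _ _ _ _ _ _ _ _ _ _ _ _ _ _ _ _
    have b1 := no_P6 hP x u p q r s
    have b2 := no_bull hB t p u x q
    have b3 := no_bull hB u s a q t
    have b4 := no_bull hB u r a t s
    have b5 := no_bull hB u r a p s
    have b6 := no_bull hB u p a r t
    have b7 := no_bull hB u p a s q
    have b8 := no_bull hB s r u x q
    grind [G.adj_comm]
  have h1' := h1.symm
  have B0 := B c0 c1 c2 c3 c4
  have B1 := B c1 c2 c3 c4 c0
  have B2 := B c2 c3 c4 c0 c1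
  have B3 := B c3 c4 c0 c1 c2
  have B4 := B c4 c0 c1 c2 c3
  clear A B
  grind [G.adj_comm]

/-- No vertex is complete to the cycle. -/
lemma no_full (hP : P6Free G) (hB : BullFree G) (hPr : IsPrimeGraph G)
    (h : IsG7 G c0 c1 c2 c3 c4 d x) (v : V)
    (v0 : G.Adj v c0) (v1 : G.Adj v c1) (v2 : G.Adj v c2) (v3 : G.Adj v c3) (v4 : G.Adj v c4) :
    False := by
  let F : V → Prop := fun a => G.Adj a c0 ∧ G.Adj a c1 ∧ G.Adj a c2 ∧ G.Adj a c3 ∧ G.Adj a c4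
  let M : V → Prop := fun u => G.Adj u c0 ∨ G.Adj u c1 ∨ G.Adj u c2 ∨ G.Adj u c3 ∨ G.Adj u c4
  have mixed : ∀ a u, F a → ¬ F u → M u → G.Adj u a := fun a u ha hn hs =>
    mixed_adj hP hB h a u ha.1 ha.2.1 ha.2.2.1 ha.2.2.2.1 ha.2.2.2.2 hn hs
  have mixed_nbr : ∀ a u z, F a → ¬ F u → M u → G.Adj z u → ¬ F z → G.Adj z a := by
    intro a u z ha hn hs hzu hz
    by_cases hm : M z
    · exact mixed a z ha hz hm
    have hua := mixed a u ha hn hs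
    by_contra hza
    obtain ⟨h1, h2, h3, h4, h5, n1, n2, n3, n4, n5, -⟩ := h
    have A : ∀ p q, G.Adj a p → G.Adj a q → ¬ G.Adj p q → ¬ G.Adj z p → ¬ G.Adj z q →
        G.Adj u p → G.Adj u q := by
      intro p q _ _ _ _ _ _
      have b := no_bull hB z u a q p
      grind [G.adj_comm]
    simp only [F, M] at *
    grind [G.adj_comm]
  let R : V → V → Prop := fun s t => G.Adj s t ∧ ¬ F t
  have F0 : ¬ F c0 := fun hF => h.n02 hF.2.2.1
  have M0 : M c0 := Or.inr (Or.inl h.e01)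
  have inv : ∀ w, Relation.ReflTransGen R c0 w → ¬ F w ∧ ∀ a, F a → G.Adj w a ∧
      ∀ y, G.Adj y w → ¬ F y → G.Adj y a := by
    intro w hw
    induction hw with
    | refl => exact ⟨F0, fun a ha => ⟨mixed a c0 ha F0 M0,
        fun y hy hn => mixed_nbr a c0 y ha F0 M0 hy hn⟩⟩
    | @tail z w _ hzw ih =>
      obtain ⟨hzw, hw⟩ := hzw
      refine ⟨hw, fun a ha => ?_⟩
      have hwa := (ih.2 a ha).2 w hzw.symm hw
      refine ⟨hwa, fun y hyw hy => ?_⟩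
      by_contra hya
      have hyz : ¬ G.Adj y z := fun hh => hya ((ih.2 a ha).2 y hh hy)
      have my : ¬ M y := fun hm => hya (mixed a y ha hy hm)
      have mw : ¬ M w := fun hm => hya (mixed_nbr a w y ha hw hm hyw hy)
      have hza := (ih.2 a ha).1
      have hz := ih.1
      have A : ∀ q, G.Adj a q → ¬ G.Adj y q → ¬ G.Adj w q → G.Adj z q := by
        intro q _ _ _
        have b := no_bull hB y w a q z
        grind [G.adj_comm]
      simp only [F, M] at *
      grind
  have nF : ∀ q, (q = c1 ∨ q = c0) → ¬ F q := by
    rintro q (rfl | rfl) hF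
    · exact h.n13 hF.2.2.2.1
    · exact F0 hF
  apply hPr
  refine ⟨{t | Relation.ReflTransGen R c0 t}, ?_,
    ⟨c0, .refl, c1, .single ⟨h.e01, nF c1 (Or.inl rfl)⟩, h.e01.ne⟩, ?_⟩
  · intro y hy
    by_cases hF : F y
    · left; intro s hs; exact ((inv s hs).2 y hF).1.symm
    · right; intro s hs hn; exact hy (Relation.ReflTransGen.tail hs ⟨hn.symm, hF⟩)
  · intro hu
    have : v ∈ {t | Relation.ReflTransGen R c0 t} := by rw [hu]; trivial
    exact (inv v this).1 ⟨v0, v1, v2, v3, v4⟩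

/-- Bull-free patterns of the neighborhood of a vertex distinguishing two adjacent twins
`p, v` on a 5-cycle `p q r s t`. -/
lemma pattern (hB : BullFree G) {p q r s t v y : V}
    (h1 : G.Adj p q) (h2 : G.Adj q r) (h3 : G.Adj r s) (h4 : G.Adj s t) (h5 : G.Adj t p)
    (n1 : ¬ G.Adj p r) (n2 : ¬ G.Adj p s) (n3 : ¬ G.Adj q s) (n4 : ¬ G.Adj q t)
    (n5 : ¬ G.Adj r t) (pv : G.Adj p v) (hv : Twin G q t r s v)
    (hy : G.Adj y v) (hyp : ¬ G.Adj y p)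
    (hfull : ¬ (G.Adj y q ∧ G.Adj y r ∧ G.Adj y s ∧ G.Adj y t)) :
    Twin G q t r s y ∨ (G.Adj y q ∧ G.Adj y r ∧ G.Adj y s ∧ ¬ G.Adj y t) ∨
      (¬ G.Adj y q ∧ G.Adj y r ∧ G.Adj y s ∧ G.Adj y t) := by
  obtain ⟨v1, v2, v3, v4⟩ := hv
  unfold Twin
  have b1 := no_bull hB y v q r p
  have b2 := no_bull hB y v t s p
  have b3 := no_bull hB t v q r y
  have b4 := no_bull hB q v t s y
  have b5 := no_bull hB v q r s y
  have b6 := no_bull hB v t s r y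
  have b7 := no_bull hB p q r s y
  have b8 := no_bull hB p t s r y
  have b9 := no_bull hB q r s t y
  grind [G.adj_comm]

/-- Three-neighbor vertices are nonadjacent to `x`; adjacency to `d` is forced. -/
lemma twin4 (hB : BullFree G) (h : IsG7 G c0 c1 c2 c3 c4 d x) {v : V}
    (hv : Twin G c0 c3 c1 c2 v) (hv4 : G.Adj c4 v) : ¬ G.Adj v x ∧ ¬ G.Adj v d := by
  obtain ⟨h1, h2, h3, h4, h5, n1, n2, n3, n4, n5, h6, h7, n6, n7, n8, h8, m0, m1, m2, m3, m4⟩ := h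
  obtain ⟨v1, v2, v3, v4⟩ := hv
  have b1 := no_bull hB x v c3 c2 c4
  have b2 := no_bull hB x d c0 c1 v
  grind [G.adj_comm]

lemma twin0 (hB : BullFree G) (h : IsG7 G c0 c1 c2 c3 c4 d x) {v : V}
    (hv : Twin G c1 c4 c2 c3 v) (hv4 : G.Adj c0 v) : ¬ G.Adj v x ∧ G.Adj v d := by
  obtain ⟨h1, h2, h3, h4, h5, n1, n2, n3, n4, n5, h6, h7, n6, n7, n8, h8, m0, m1, m2, m3, m4⟩ := h
  obtain ⟨v1, v2, v3, v4⟩ := hv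
  have b1 := no_bull hB x v c1 c2 c0
  have b2 := no_bull hB d c0 c1 c2 v
  grind [G.adj_comm]

lemma twin1 (hB : BullFree G) (h : IsG7 G c0 c1 c2 c3 c4 d x) {v : V}
    (hv : Twin G c2 c0 c3 c4 v) (hv4 : G.Adj c1 v) : ¬ G.Adj v x ∧ ¬ G.Adj v d := by
  obtain ⟨h1, h2, h3, h4, h5, n1, n2, n3, n4, n5, h6, h7, n6, n7, n8, h8, m0, m1, m2, m3, m4⟩ := h
  obtain ⟨v1, v2, v3, v4⟩ := hv
  have b1 := no_bull hB x v c2 c3 c1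
  have b2 := no_bull hB x d v c2 c0
  grind [G.adj_comm]

lemma twin3 (hB : BullFree G) (h : IsG7 G c0 c1 c2 c3 c4 d x) {v : V}
    (hv : Twin G c4 c2 c0 c1 v) (hv4 : G.Adj c3 v) : ¬ G.Adj v x ∧ G.Adj v d := by
  obtain ⟨v1, v2, v3, v4⟩ := hv
  exact twin0 hB h.refl ⟨v2, v1, v4, v3⟩ hv4

lemma twin2 (hB : BullFree G) (h : IsG7 G c0 c1 c2 c3 c4 d x) {v : V}
    (hv : Twin G c3 c1 c4 c0 v) (hv4 : G.Adj c2 v) : ¬ G.Adj v x ∧ ¬ G.Adj v d := by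
  obtain ⟨v1, v2, v3, v4⟩ := hv
  exact twin1 hB h.refl ⟨v2, v1, v4, v3⟩ hv4

/-- No three-neighbor vertex around `c4`. -/
lemma no_twin4 (hP : P6Free G) (hB : BullFree G) (hPr : IsPrimeGraph G)
    (h : IsG7 G c0 c1 c2 c3 c4 d x) {v : V}
    (hv : Twin G c0 c3 c1 c2 v) (hv4 : G.Adj c4 v) : False := by
  refine grow hPr (fun t => IsG7 G c0 c1 c2 c3 t d x) (Twin G c0 c3 c1 c2) c4 v x h hv hv4
    ?_ ?_ (fun hh => h.x0 hh.e40)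
  · intro t t' ht ht' htt
    obtain ⟨t1, t2⟩ := twin4 hB ht ht' htt
    obtain ⟨v1, v2, v3, v4⟩ := ht'
    obtain ⟨⟩ := ht
    constructor <;> first | assumption | (rw [G.adj_comm]; assumption)
  · intro t t' y ht ht' htt yt' yt
    have T : Twin G c0 c3 c1 c2 t' :=
      ⟨ht'.e40, ht'.e34.symm, fun hh => ht'.n14 hh.symm, fun hh => ht'.n24 hh.symm⟩
    rcases pattern hB ht.e40 ht.e01 ht.e12 ht.e23 ht.e34 (fun hh => ht.n14 hh.symm)
      (fun hh => ht.n24 hh.symm) ht.n02 ht.n03 ht.n13 htt T yt' yt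
      (fun hh => no_full hP hB hPr ht' y hh.1 hh.2.1 hh.2.2.1 hh.2.2.2 yt') with hT | hT | hT
    · exact hT
    · exfalso
      obtain ⟨y0, y1, y2, y3⟩ := hT
      have t1 := twin1 hB ht (v := y) ⟨y2, y0, y3, yt⟩ y1.symm
      obtain ⟨⟩ := ht
      have b1 := no_bull hB d c0 y c2 t'
      have q := ht'.d4
      have q1 := ht'.e40
      have q2 := ht'.n24
      grind [G.adj_comm]
    · exfalso
      obtain ⟨y0, y1, y2, y3⟩ := hT
      have t1 := twin2 hB ht (v := y) ⟨y3, y1, yt, y0⟩ y2.symm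
      obtain ⟨⟩ := ht
      have b1 := no_bull hB d c3 y c1 t'
      have q := ht'.d4
      have q1 := ht'.e34
      have q2 := ht'.n14
      grind [G.adj_comm]

/-- No three-neighbor vertex around `c0`. -/
lemma no_twin0 (hP : P6Free G) (hB : BullFree G) (hPr : IsPrimeGraph G)
    (h : IsG7 G c0 c1 c2 c3 c4 d x) {v : V}
    (hv : Twin G c1 c4 c2 c3 v) (hv0 : G.Adj c0 v) : False := by
  refine grow hPr (fun t => IsG7 G t c1 c2 c3 c4 d x) (Twin G c1 c4 c2 c3) c0 v x h hv hv0
    ?_ ?_ (fun hh => h.x1 hh.e01)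
  · intro t t' ht ht' htt
    obtain ⟨t1, t2⟩ := twin0 hB ht ht' htt
    obtain ⟨v1, v2, v3, v4⟩ := ht'
    obtain ⟨⟩ := ht
    constructor <;> first | assumption | (rw [G.adj_comm]; assumption)
  · intro t t' y ht ht' htt yt' yt
    have T : Twin G c1 c4 c2 c3 t' := ⟨ht'.e01, ht'.e40.symm, ht'.n02, ht'.n03⟩
    rcases pattern hB ht.e01 ht.e12 ht.e23 ht.e34 ht.e40 ht.n02 ht.n03 ht.n13 ht.n14 ht.n24
      htt T yt' yt
      (fun hh => no_full hP hB hPr ht' y yt' hh.1 hh.2.1 hh.2.2.1 hh.2.2.2) with hT | hT | hT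
    · exact hT
    · exfalso
      obtain ⟨y1, y2, y3, y4⟩ := hT
      have t1 := twin2 hB ht (v := y) ⟨y3, y1, y4, yt⟩ y2.symm
      obtain ⟨⟩ := ht
      have b1 := no_bull hB y t' d x t
      have q := ht'.d0
      have q1 := ht'.x0
      grind [G.adj_comm]
    · exfalso
      obtain ⟨y1, y2, y3, y4⟩ := hT
      have t1 := twin3 hB ht (v := y) ⟨y4, y2, yt, y1⟩ y3.symm
      obtain ⟨⟩ := ht
      have b1 := no_bull hB x d t' c1 y
      have q := ht'.d0
      have q1 := ht'.x0
      have q2 := ht'.e01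
      grind [G.adj_comm]

/-- No three-neighbor vertex around `c1`. -/
lemma no_twin1 (hP : P6Free G) (hB : BullFree G) (hPr : IsPrimeGraph G)
    (h : IsG7 G c0 c1 c2 c3 c4 d x) {v : V}
    (hv : Twin G c2 c0 c3 c4 v) (hv1 : G.Adj c1 v) : False := by
  refine grow hPr (fun t => IsG7 G c0 t c2 c3 c4 d x) (Twin G c2 c0 c3 c4) c1 v x h hv hv1
    ?_ ?_ (fun hh => h.x2 hh.e12)
  · intro t t' ht ht' htt
    obtain ⟨t1, t2⟩ := twin1 hB ht ht' htt
    obtain ⟨v1, v2, v3, v4⟩ := ht'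
    obtain ⟨⟩ := ht
    constructor <;> first | assumption | (rw [G.adj_comm]; assumption)
  · intro t t' y ht ht' htt yt' yt
    have T : Twin G c2 c0 c3 c4 t' := ⟨ht'.e12, ht'.e01.symm, ht'.n13, ht'.n14⟩
    rcases pattern hB ht.e12 ht.e23 ht.e34 ht.e40 ht.e01 ht.n13 ht.n14 ht.n24
      (fun hh => ht.n02 hh.symm) (fun hh => ht.n03 hh.symm) htt T yt' yt
      (fun hh => no_full hP hB hPr ht' y hh.2.2.2 yt' hh.1 hh.2.1 hh.2.2.1) with hT | hT | hT
    · exact hT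
    · exfalso
      obtain ⟨y2, y3, y4, y0⟩ := hT
      have t1 := twin3 hB ht (v := y) ⟨y4, y2, y0, yt⟩ y3.symm
      obtain ⟨⟩ := ht
      have b1 := no_bull hB x d y t' c3
      have q := ht'.d1
      have q1 := ht'.x1
      have q2 := ht'.n13
      grind [G.adj_comm]
    · exfalso
      obtain ⟨y2, y3, y4, y0⟩ := hT
      have t1 := twin4 hB ht (v := y) ⟨y0, y3, yt, y2⟩ y4.symm
      obtain ⟨⟩ := ht
      have b1 := no_bull hB d c0 t' c2 y
      have q := ht'.d1
      have q1 := ht'.e01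
      have q2 := ht'.e12
      grind [G.adj_comm]

end


theorem stmt19 (G : SimpleGraph V) [DecidableRel G.Adj]
    (hP : P6Free G) (hB : BullFree G) (hPr : IsPrimeGraph G)
    (c : Fin 5 → V) (hc : IsInducedC5 G c)
    (d : V) (hd : d ∉ Set.range c)
    (hd0 : G.Adj d (c 0)) (hd3 : G.Adj d (c 3))
    (hdno : ∀ i : Fin 5, i ≠ 0 → i ≠ 3 → ¬ G.Adj d (c i))
    (x : V) (hx : x ∉ Set.range c) (hxd : G.Adj x d) (hxne : x ≠ d)
    (hx0 : ∀ i : Fin 5, ¬ G.Adj x (c i)) :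
    ∀ v : V, v ∉ Set.range c →
      nbrCount G c v = 4 ∨ nbrCount G c v = 2 ∨ nbrCount G c v ≤ 1 := by
  intro v _
  have h : IsG7 G (c 0) (c 1) (c 2) (c 3) (c 4) d x := by
    obtain ⟨_, hadj⟩ := hc
    constructor <;> first
      | exact hd0
      | exact hd3
      | exact hxd
      | exact hx0 _
      | exact hdno _ (by decide) (by decide)
      | (rw [hadj]; decide)
  have f5 := no_full hP hB hPr h v
  have f4 := no_twin4 hP hB hPr h (v := v)
  have f0 := no_twin0 hP hB hPr h (v := v)
  have f1 := no_twin1 hP hB hPr h (v := v)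
  have f3 := no_twin0 hP hB hPr h.refl (v := v)
  have f2 := no_twin1 hP hB hPr h.refl (v := v)
  unfold Twin at f0 f1 f2 f3 f4
  obtain ⟨h1, h2, h3, h4, h5, n1, n2, n3, n4, n5, -⟩ := h
  have b0 := no_bull hB (c 4) (c 0) (c 1) (c 2) v
  have b1 := no_bull hB (c 0) (c 1) (c 2) (c 3) v
  have b2 := no_bull hB (c 1) (c 2) (c 3) (c 4) v
  have b3 := no_bull hB (c 2) (c 3) (c 4) (c 0) v
  have b4 := no_bull hB (c 3) (c 4) (c 0) (c 1) v
  simp only [G.adj_comm _ v] at *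
  have e : nbrCount G c v = (if G.Adj v (c 0) then 1 else 0) + (if G.Adj v (c 1) then 1 else 0) +
      (if G.Adj v (c 2) then 1 else 0) + (if G.Adj v (c 3) then 1 else 0) +
      (if G.Adj v (c 4) then 1 else 0) := by
    simp only [nbrCount, Finset.card_filter, Fin.sum_univ_five]
  rw [e]
  grind [G.adj_comm]
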